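/- For all 0 < s < t < T and every bounded Borel measurable function f : ℝ^ν → ℝ one has the ℝ^ν-valued identity E[f(b_t)(B_t − B_s)] = −E[ f(b_t) ∫_s^t ( (x − b_u)/u + (y − b_u)/(T−u) ) du ]; here (x−z)/u + (y−z)/(T−u) = ∇_z ln d_u(z) with d_u(z) := p_u(x,z) p_{T−u}(z,y)/p_T(x,y). -/

import Mathlib

open MeasureTheory ProbabilityTheory

/-- A `ν`-dimensional Brownian motion `B` on a filtered probability space
`(Ω, m, (ℱ_t), P)` satisfying the usual conditions: the filtration is complete and
right-continuous, `B` has continuous paths on `[0,∞)` with `B_0 = 0`, `B` is adapted, and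
for `0 ≤ s ≤ t` the increment `B_t − B_s` is independent of `ℱ_s` and is a centered
Gaussian vector with covariance matrix `(t−s)·Id` (componentwise iid `N(0, t−s)`). -/
structure IsBrownianMotion {Ω : Type*} [m : MeasurableSpace Ω] (P : Measure Ω) (ν : ℕ)
    (F : Filtration ℝ m) (B : ℝ → Ω → Fin ν → ℝ) : Prop where
  complete : ∀ (t : ℝ) (A : Set Ω), P A = 0 → MeasurableSet[F t] A
  rightCont : ∀ t : ℝ, (F t : MeasurableSpace Ω) = ⨅ s ∈ Set.Ioi t, (F s : MeasurableSpace Ω)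
  contPaths : ∀ ω : Ω, ContinuousOn (fun t => B t ω) (Set.Ici 0)
  start : ∀ ω : Ω, B 0 ω = 0
  adapted : ∀ t : ℝ, Measurable[F t] (B t)
  indepIncr : ∀ s t : ℝ, 0 ≤ s → s ≤ t →
    Indep (MeasurableSpace.comap (fun ω => B t ω - B s ω) inferInstance) (F s) P
  gaussIncr : ∀ s t : ℝ, 0 ≤ s → s ≤ t →
    Measure.map (fun ω => B t ω - B s ω) P =
      Measure.pi fun _ : Fin ν => gaussianReal 0 (Real.toNNReal (t - s))

/-- The Brownian bridge from `q` to `y` in time `T` driven by the path `B`: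
`b_t = (t/T)y + ((T−t)/T)q + B_t − (T−t)∫₀ᵗ (T−s)⁻² B_s ds` for `t < T`, and `b_t = y`
otherwise (in particular `b_T = y`). -/
noncomputable def bridgeBB (ν : ℕ) (T : ℝ) (q y : Fin ν → ℝ) (B : ℝ → Fin ν → ℝ)
    (t : ℝ) : Fin ν → ℝ :=
  if t < T then
    (t / T) • y + ((T - t) / T) • q + B t -
      (T - t) • ∫ s in (0 : ℝ)..t, ((T - s) ^ 2)⁻¹ • B s
  else y

/-!
The bridge satisfies `b_t - b_s = B_t - B_s + ∫_s^t (y - b_u)/(T - u) du` pathwise, so the claim is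
equivalent to `E[f(b_t) (b_t - b_s + ∫_s^t (x - b_u)/u du)] = 0`. Now `b_u` is a deterministic
affine function of the Wiener integral `∫_0^u (T - r)⁻¹ dB_r`, which has independent centred
isotropic Gaussian increments. By linear regression of `b_u` on `b_t`,
`E[f(b_t) (b_u - x)] = (u/t) E[f(b_t) (b_t - x)]` for `u ≤ t`. Hence both
`E[f(b_t) (b_t - b_s)]` and `-E[f(b_t) ∫_s^t (x - b_u)/u du]` equal
`((t - s)/t) E[f(b_t) (b_t - x)]`.
-/

open Filter
open scoped Topology NNReal

/-- The `k`-th point of the partition of `[a, b]` into `n` intervals of equal length. -/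
noncomputable def uniformPartition (a b : ℝ) (n k : ℕ) : ℝ := a + k * ((b - a) / n)

namespace uniformPartition

variable {a b : ℝ}

lemma zero_right (a b : ℝ) (n : ℕ) : uniformPartition a b n 0 = a := by
  simp [uniformPartition]

lemma self_right (a b : ℝ) {n : ℕ} (hn : n ≠ 0) : uniformPartition a b n n = b := by
  have : (n : ℝ) ≠ 0 := Nat.cast_ne_zero.2 hn
  rw [uniformPartition, mul_div_cancel₀ _ this, add_sub_cancel]

lemma succ_sub (a b : ℝ) (n k : ℕ) :
    uniformPartition a b n (k + 1) - uniformPartition a b n k = (b - a) / n := by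
  simp only [uniformPartition, Nat.cast_add, Nat.cast_one]
  ring

lemma monotone (hab : a ≤ b) (n : ℕ) : Monotone (uniformPartition a b n) := fun i j hij ↦ by
  have : 0 ≤ (b - a) / n := div_nonneg (sub_nonneg.2 hab) n.cast_nonneg
  unfold uniformPartition
  gcongr

lemma mem_Icc (hab : a ≤ b) {n k : ℕ} (hk : k ≤ n) : uniformPartition a b n k ∈ Set.Icc a b := by
  rcases Nat.eq_zero_or_pos n with rfl | hn
  · simpa [uniformPartition] using hab
  · refine ⟨?_, ?_⟩
    · simpa only [zero_right] using monotone hab n k.zero_le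
    · simpa only [self_right a b hn.ne'] using monotone hab n hk

end uniformPartition

section RiemannSums

variable {E : Type*} [NormedAddCommGroup E] [NormedSpace ℝ E] [CompleteSpace E]
  {w : ℝ → E} {a b : ℝ}

lemma norm_sum_integral_smul_sub_integral_smul_le {p τ : ℕ → ℝ} {φ : ℝ → ℝ} {n : ℕ} {ε : ℝ}
    (hp : Monotone p) (hφ : ContinuousOn φ (Set.Icc (p 0) (p n)))
    (hw : ContinuousOn w (Set.Icc (p 0) (p n)))
    (hε : ∀ k < n, ∀ r ∈ Set.Icc (p k) (p (k + 1)), ‖w (τ k) - w r‖ ≤ ε) :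
    ‖∑ k ∈ Finset.range n, (∫ r in p k..p (k + 1), φ r) • w (τ k) - ∫ r in p 0..p n, φ r • w r‖
      ≤ ε * ∫ r in p 0..p n, |φ r| := by
  have hsub {k : ℕ} (hk : k < n) :
      Set.uIcc (p k) (p (k + 1)) ⊆ Set.Icc (p 0) (p n) := by
    rw [Set.uIcc_of_le (hp k.le_succ)]
    exact Set.Icc_subset_Icc (hp k.zero_le) (hp hk)
  have hφw := hφ.smul hw
  have hint {k : ℕ} (hk : k < n) : IntervalIntegrable φ volume (p k) (p (k + 1)) :=
    (hφ.mono (hsub hk)).intervalIntegrable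
  have hint_smul {k : ℕ} (hk : k < n) :
      IntervalIntegrable (fun r ↦ φ r • w r) volume (p k) (p (k + 1)) :=
    (hφw.mono (hsub hk)).intervalIntegrable
  have hterm {k : ℕ} (hk : k < n) :
      ‖(∫ r in p k..p (k + 1), φ r) • w (τ k) - ∫ r in p k..p (k + 1), φ r • w r‖
        ≤ ∫ r in p k..p (k + 1), ε * |φ r| := by
    rw [← intervalIntegral.integral_smul_const,
      ← intervalIntegral.integral_sub ((hint hk).smul_continuousOn continuousOn_const)
        (hint_smul hk)]
    refine intervalIntegral.norm_integral_le_of_norm_le (hp k.le_succ)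
      (.of_forall fun r hr ↦ ?_) ((hint hk).abs.const_mul ε)
    rw [← smul_sub, norm_smul, mul_comm, Real.norm_eq_abs]
    gcongr
    exact hε k hk r (Set.Ioc_subset_Icc_self hr)
  rw [← intervalIntegral.sum_integral_adjacent_intervals (a := p) fun k hk ↦ hint_smul hk,
    ← intervalIntegral.sum_integral_adjacent_intervals (a := p) fun k hk ↦ (hint hk).abs,
    ← Finset.sum_sub_distrib, Finset.mul_sum]
  refine (norm_sum_le _ _).trans (Finset.sum_le_sum fun k hk ↦ ?_)
  rw [← intervalIntegral.integral_const_mul]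
  exact hterm (Finset.mem_range.1 hk)

lemma tendsto_sum_integral_smul_uniformPartition {φ : ℝ → ℝ} {τ : ℕ → ℕ → ℝ} (hab : a ≤ b)
    (hφ : ContinuousOn φ (Set.Icc a b)) (hw : ContinuousOn w (Set.Icc a b))
    (hτ : ∀ n, ∀ k < n,
      τ n k ∈ Set.Icc (uniformPartition a b n k) (uniformPartition a b n (k + 1))) :
    Tendsto (fun n : ℕ ↦ ∑ k ∈ Finset.range n,
        (∫ r in uniformPartition a b n k..uniformPartition a b n (k + 1), φ r) • w (τ n k))
      atTop (𝓝 (∫ r in a..b, φ r • w r)) := by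
  rw [Metric.tendsto_atTop]
  intro ε hε
  set I := ∫ r in a..b, |φ r|
  have hI : 0 ≤ I := intervalIntegral.integral_nonneg hab fun r _ ↦ abs_nonneg _
  obtain ⟨δ, hδ, hwδ⟩ := Metric.uniformContinuousOn_iff.1
    (isCompact_Icc.uniformContinuousOn_of_continuous hw) (ε / (I + 1)) (by positivity)
  have hmesh : ∀ᶠ n : ℕ in atTop, (b - a) / n < δ :=
    (tendsto_const_div_atTop_nhds_zero_nat (b - a)).eventually_lt_const hδ
  obtain ⟨N, hN⟩ := (hmesh.and (eventually_ne_atTop 0)).exists_forall_of_atTop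
  refine ⟨N, fun n hn ↦ ?_⟩
  obtain ⟨hnδ, hn0⟩ := hN n hn
  have hclose : ∀ k < n, ∀ r ∈
      Set.Icc (uniformPartition a b n k) (uniformPartition a b n (k + 1)),
      ‖w (τ n k) - w r‖ ≤ ε / (I + 1) := fun k hk r hr ↦ by
    have hsub : Set.Icc (uniformPartition a b n k) (uniformPartition a b n (k + 1)) ⊆
        Set.Icc a b := Set.Icc_subset_Icc (uniformPartition.mem_Icc hab hk.le).1
      (uniformPartition.mem_Icc hab hk).2
    rw [← dist_eq_norm]
    refine (hwδ _ (hsub (hτ n k hk)) r (hsub hr) ?_).le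
    exact (Real.dist_le_of_mem_Icc (hτ n k hk) hr).trans_lt
      ((uniformPartition.succ_sub a b n k).trans_lt hnδ)
  have hbound := norm_sum_integral_smul_sub_integral_smul_le
    (uniformPartition.monotone hab n) (φ := φ) (w := w) (τ := τ n) (n := n)
    (by rwa [uniformPartition.zero_right, uniformPartition.self_right a b hn0])
    (by rwa [uniformPartition.zero_right, uniformPartition.self_right a b hn0]) hclose
  rw [uniformPartition.zero_right, uniformPartition.self_right a b hn0] at hbound
  rw [dist_eq_norm]
  calc _ ≤ ε / (I + 1) * I := hbound
    _ < ε := by rw [div_mul_eq_mul_div, div_lt_iff₀ (by positivity)]; linarith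

lemma tendsto_sum_sub_smul_uniformPartition (hab : a ≤ b) (hw : ContinuousOn w (Set.Icc a b)) :
    Tendsto (fun n : ℕ ↦ ∑ k ∈ Finset.range n,
        (uniformPartition a b n (k + 1) - uniformPartition a b n k) • w (uniformPartition a b n k))
      atTop (𝓝 (∫ r in a..b, w r)) := by
  have := tendsto_sum_integral_smul_uniformPartition (φ := 1) (τ := uniformPartition a b) hab
    continuousOn_const hw fun n k _ ↦ Set.left_mem_Icc.2 (uniformPartition.monotone hab n k.le_succ)
  simpa only [Pi.one_apply, intervalIntegral.integral_const, smul_eq_mul, mul_one, one_smul]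
    using this

end RiemannSums

section WienerIntegral

variable {E : Type*} [NormedAddCommGroup E] [NormedSpace ℝ E] {h : ℝ → ℝ} {w : ℝ → E} {a b c : ℝ}

/-- The integral `∫ₐᵇ h dw` of a continuously differentiable function `h` against a continuous path
`w`, which need not have bounded variation: integration by parts serves as the definition. -/
noncomputable def wienerIntegral (h : ℝ → ℝ) (w : ℝ → E) (a b : ℝ) : E :=
  h b • w b - h a • w a - ∫ r in a..b, deriv h r • w r

/-- The Riemann–Stieltjes sum, with left tags, of `∫ₐᵇ h dw` over the first `k` intervals of the
partition of `[a, b]` into `n` intervals of equal length. -/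
noncomputable def wienerSum (h : ℝ → ℝ) (w : ℝ → E) (a b : ℝ) (n k : ℕ) : E :=
  ∑ i ∈ Finset.range k, h (uniformPartition a b n i) •
    (w (uniformPartition a b n (i + 1)) - w (uniformPartition a b n i))

lemma wienerIntegral_add_adjacent (hab : a ≤ b) (hbc : b ≤ c)
    (hh : ContinuousOn (deriv h) (Set.Icc a c)) (hw : ContinuousOn w (Set.Icc a c)) :
    wienerIntegral h w a b + wienerIntegral h w b c = wienerIntegral h w a c := by
  have hint {p q : ℝ} (hp : a ≤ p) (hpq : p ≤ q) (hq : q ≤ c) :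
      IntervalIntegrable (fun r ↦ deriv h r • w r) volume p q :=
    ((hh.smul hw).mono (Set.Icc_subset_Icc hp hq)).intervalIntegrable_of_Icc hpq
  unfold wienerIntegral
  rw [← intervalIntegral.integral_add_adjacent_intervals (hint le_rfl hab hbc)
    (hint hab hbc le_rfl)]
  abel

lemma wienerSum_succ (h : ℝ → ℝ) (w : ℝ → E) (a b : ℝ) (n k : ℕ) :
    wienerSum h w a b n (k + 1) = wienerSum h w a b n k + h (uniformPartition a b n k) •
      (w (uniformPartition a b n (k + 1)) - w (uniformPartition a b n k)) :=
  Finset.sum_range_succ _ _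

lemma wienerSum_eq_sub_sum_integral_deriv_smul (hab : a ≤ b)
    (hd : ∀ r ∈ Set.Icc a b, DifferentiableAt ℝ h r) (hh : ContinuousOn (deriv h) (Set.Icc a b))
    (w : ℝ → E) {n : ℕ} (hn : n ≠ 0) :
    wienerSum h w a b n n = h b • w b - h a • w a - ∑ k ∈ Finset.range n,
      (∫ r in uniformPartition a b n k..uniformPartition a b n (k + 1), deriv h r) •
        w (uniformPartition a b n (k + 1)) := by
  set p := uniformPartition a b n
  have hFTC {k : ℕ} (hk : k < n) : ∫ r in p k..p (k + 1), deriv h r = h (p (k + 1)) - h (p k) := by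
    have hsub : Set.uIcc (p k) (p (k + 1)) ⊆ Set.Icc a b :=
      Set.uIcc_subset_Icc (uniformPartition.mem_Icc hab hk.le) (uniformPartition.mem_Icc hab hk)
    exact intervalIntegral.integral_deriv_eq_sub (fun r hr ↦ hd r (hsub hr))
      (hh.mono hsub).intervalIntegrable
  have htelescope := Finset.sum_range_sub (fun k ↦ h (p k) • w (p k)) n
  simp only [p, uniformPartition.zero_right, uniformPartition.self_right a b hn] at htelescope
  rw [← htelescope, wienerSum, ← Finset.sum_sub_distrib]
  refine Finset.sum_congr rfl fun k hk ↦ ?_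
  rw [hFTC (Finset.mem_range.1 hk)]
  simp only [p]
  module

lemma tendsto_wienerSum [CompleteSpace E] (hab : a ≤ b)
    (hd : ∀ r ∈ Set.Icc a b, DifferentiableAt ℝ h r) (hh : ContinuousOn (deriv h) (Set.Icc a b))
    (hw : ContinuousOn w (Set.Icc a b)) :
    Tendsto (fun n ↦ wienerSum h w a b n n) atTop (𝓝 (wienerIntegral h w a b)) := by
  refine Tendsto.congr' ?_ ((tendsto_sum_integral_smul_uniformPartition hab hh hw
    (τ := fun n k ↦ uniformPartition a b n (k + 1)) fun n k _ ↦ Set.right_mem_Icc.2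
      (uniformPartition.monotone hab n k.le_succ)).const_sub (h b • w b - h a • w a))
  filter_upwards [eventually_ne_atTop 0] with n hn
  exact (wienerSum_eq_sub_sum_integral_deriv_smul hab hd hh w hn).symm

end WienerIntegral

section IsotropicGaussian

variable {Ω ι : Type*} [mΩ : MeasurableSpace Ω] [Fintype ι] {P : Measure Ω} {X Y : Ω → ι → ℝ}
  {v w : ℝ≥0}

/-- The centred Gaussian measure on `ι → ℝ` with covariance matrix `v • 1`. -/
noncomputable def isotropicGaussian (ι : Type*) [Fintype ι] (v : ℝ≥0) : Measure (ι → ℝ) :=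
  Measure.pi fun _ ↦ gaussianReal 0 v

instance isProbabilityMeasure_isotropicGaussian (v : ℝ≥0) :
    IsProbabilityMeasure (isotropicGaussian ι v) :=
  inferInstanceAs (IsProbabilityMeasure (Measure.pi fun _ ↦ gaussianReal 0 v))

lemma charFunDual_isotropicGaussian [DecidableEq ι] (v : ℝ≥0) (L : StrongDual ℝ (ι → ℝ)) :
    charFunDual (isotropicGaussian ι v) L =
      Complex.exp (-(v * ∑ i, (L (Pi.single i 1) : ℂ) ^ 2 / 2)) := by
  have hcoord (i : ι) :
      charFunDual (gaussianReal 0 v) (L.comp (ContinuousLinearMap.single ℝ (fun _ : ι ↦ ℝ) i)) =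
        Complex.exp (-(v * ((L (Pi.single i 1) : ℂ) ^ 2 / 2))) := by
    have hmul : ⇑(L.comp (ContinuousLinearMap.single ℝ (fun _ : ι ↦ ℝ) i)) =
        (L (Pi.single i 1) * ·) := by
      ext r
      simpa [mul_comm] using congrArg L (Pi.single_smul (f := fun _ : ι ↦ ℝ) i r 1)
    rw [charFunDual_eq_charFun_map_one, hmul, gaussianReal_map_const_mul, charFun_gaussianReal]
    congr 1
    push_cast
    ring
  rw [isotropicGaussian, charFunDual_pi]
  simp only [hcoord]
  rw [← Complex.exp_sum, Finset.sum_neg_distrib, Finset.mul_sum]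

lemma charFunDual_isotropicGaussian_zero (L : StrongDual ℝ (ι → ℝ)) :
    charFunDual (isotropicGaussian ι 0) L = 1 := by
  classical simp [charFunDual_isotropicGaussian]

lemma charFunDual_isotropicGaussian_add (v w : ℝ≥0) (L : StrongDual ℝ (ι → ℝ)) :
    charFunDual (isotropicGaussian ι (v + w)) L =
      charFunDual (isotropicGaussian ι v) L * charFunDual (isotropicGaussian ι w) L := by
  classical
  simp only [charFunDual_isotropicGaussian, ← Complex.exp_add]
  congr 1
  push_cast
  ring

lemma charFunDual_isotropicGaussian_smul (v : ℝ≥0) (c : ℝ) (L : StrongDual ℝ (ι → ℝ)) :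
    charFunDual (isotropicGaussian ι v) (c • L) =
      charFunDual (isotropicGaussian ι (‖c‖₊ ^ 2 * v)) L := by
  classical
  have hc : (‖c‖ : ℂ) ^ 2 = c ^ 2 := by
    rw [← Complex.ofReal_pow, Real.norm_eq_abs, sq_abs, Complex.ofReal_pow]
  simp only [charFunDual_isotropicGaussian, smul_apply, smul_eq_mul]
  congr 2
  push_cast
  simp only [hc, mul_pow, Finset.mul_sum]
  exact Finset.sum_congr rfl fun i _ ↦ by ring

lemma continuous_charFunDual_isotropicGaussian (L : StrongDual ℝ (ι → ℝ)) :
    Continuous fun v : ℝ≥0 ↦ charFunDual (isotropicGaussian ι v) L := by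
  classical
  simp only [charFunDual_isotropicGaussian]
  fun_prop

lemma integral_norm_isotropicGaussian (v : ℝ≥0) :
    ∫ z, ‖z‖ ∂isotropicGaussian ι v = √v * ∫ z, ‖z‖ ∂isotropicGaussian ι 1 := by
  have hmap : isotropicGaussian ι v = (isotropicGaussian ι 1).map (√(v : ℝ) • ·) := by
    have hcoord : gaussianReal 0 v = (gaussianReal 0 1).map (√(v : ℝ) * ·) := by
      rw [gaussianReal_map_const_mul, mul_zero, mul_one]
      congr 1
      exact NNReal.coe_injective (Real.sq_sqrt v.2).symm
    rw [isotropicGaussian, hcoord, ← Measure.pi_map_pi fun _ ↦ by fun_prop]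
    rfl
  rw [hmap, integral_map (by fun_prop) (by fun_prop)]
  simp only [norm_smul, Real.norm_eq_abs, abs_of_nonneg (Real.sqrt_nonneg _), integral_const_mul]

lemma integrable_id_isotropicGaussian (v : ℝ≥0) : Integrable id (isotropicGaussian ι v) :=
  Integrable.of_eval fun i ↦ (measurePreserving_eval (fun _ : ι ↦ gaussianReal 0 v) i
    ).integrable_comp_of_integrable ((memLp_id_gaussianReal 1).integrable le_rfl)

lemma integral_id_isotropicGaussian (v : ℝ≥0) : ∫ z, z ∂isotropicGaussian ι v = 0 := by
  ext i
  have heval : HasLaw (fun z ↦ z i) (gaussianReal 0 v) (isotropicGaussian ι v) :=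
    (measurePreserving_eval (fun _ : ι ↦ gaussianReal 0 v) i).hasLaw
  rw [eval_integral (f := fun z ↦ z) fun i ↦ (integrable_id_isotropicGaussian v).eval i]
  exact heval.integral_eq.trans integral_id_gaussianReal

lemma integrable_of_hasLaw_isotropicGaussian (hX : HasLaw X (isotropicGaussian ι v) P) :
    Integrable X P :=
  (hX.map_eq ▸ integrable_id_isotropicGaussian v).comp_aemeasurable hX.aemeasurable

lemma integral_eq_zero_of_hasLaw_isotropicGaussian (hX : HasLaw X (isotropicGaussian ι v) P) :
    ∫ ω, X ω ∂P = 0 :=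
  hX.integral_eq.trans (integral_id_isotropicGaussian v)

lemma integral_cexp_add_of_indepFun [IsProbabilityMeasure P]
    (hX : HasLaw X (isotropicGaussian ι v) P) (hY : HasLaw Y (isotropicGaussian ι w) P)
    (hXY : IndepFun X Y P) (L M : StrongDual ℝ (ι → ℝ)) :
    ∫ ω, Complex.exp ((L (X ω) + M (Y ω) : ℝ) * Complex.I) ∂P =
      charFunDual (isotropicGaussian ι v) L * charFunDual (isotropicGaussian ι w) M := by
  rw [← hX.map_eq, ← hY.map_eq]
  have h := (indepFun_iff_charFunDual_prod hX.aemeasurable hY.aemeasurable).1 hXY (L.coprod M)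
  rw [charFunDual_apply, integral_map (hX.aemeasurable.prodMk hY.aemeasurable) (by fun_prop)] at h
  simpa using h

lemma charFunDual_isotropicGaussian_residual (v w : ℝ≥0) (L M : StrongDual ℝ (ι → ℝ)) :
    charFunDual (isotropicGaussian ι v) ((w : ℝ) • L + M) *
        charFunDual (isotropicGaussian ι w) (M - (v : ℝ) • L) =
      charFunDual (isotropicGaussian ι v) ((w : ℝ) • L) *
          charFunDual (isotropicGaussian ι w) (-((v : ℝ) • L)) *
        (charFunDual (isotropicGaussian ι v) M * charFunDual (isotropicGaussian ι w) M) := by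
  classical
  simp only [charFunDual_isotropicGaussian, ← Complex.exp_add, add_apply, sub_apply, neg_apply,
    smul_apply, smul_eq_mul, Finset.mul_sum, ← Finset.sum_neg_distrib, ← Finset.sum_add_distrib]
  congr 1
  refine Finset.sum_congr rfl fun i _ ↦ ?_
  push_cast
  ring

/-- `w • X - v • Y` is the residual of the linear regression of `X` on `X + Y`, up to a factor. -/
lemma indepFun_smul_sub_smul_add [IsProbabilityMeasure P]
    (hX : HasLaw X (isotropicGaussian ι v) P) (hY : HasLaw Y (isotropicGaussian ι w) P)
    (hXY : IndepFun X Y P) :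
    IndepFun (fun ω ↦ (w : ℝ) • X ω - (v : ℝ) • Y ω) (fun ω ↦ X ω + Y ω) P := by
  classical
  have hXm := hX.aemeasurable
  have hYm := hY.aemeasurable
  have hchar (L M : StrongDual ℝ (ι → ℝ)) :
      ∫ ω, Complex.exp ((L ((w : ℝ) • X ω - (v : ℝ) • Y ω) + M (X ω + Y ω) : ℝ) * Complex.I) ∂P =
        charFunDual (isotropicGaussian ι v) ((w : ℝ) • L + M) *
          charFunDual (isotropicGaussian ι w) (M - (v : ℝ) • L) := by
    rw [← integral_cexp_add_of_indepFun hX hY hXY]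
    refine integral_congr_ae (.of_forall fun ω ↦ ?_)
    simp only [map_sub, map_add, map_smul, smul_eq_mul, add_apply, sub_apply, smul_apply]
    congr 3
    ring
  rw [indepFun_iff_charFunDual_prod (by fun_prop) (by fun_prop)]
  intro L
  rw [charFunDual_apply, charFunDual_apply, charFunDual_apply, integral_map (by fun_prop)
    (by fun_prop), integral_map (by fun_prop) (by fun_prop), integral_map (by fun_prop)
    (by fun_prop)]
  have h₁ := hchar (L.comp (.inl ℝ _ _)) (L.comp (.inr ℝ _ _))
  have h₂ := hchar (L.comp (.inl ℝ _ _)) 0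
  have h₃ := hchar 0 (L.comp (.inr ℝ _ _))
  simp only [zero_apply, add_zero, zero_add, smul_zero, zero_sub, sub_zero] at h₁ h₂ h₃
  simp_rw [← L.comp_inl_add_comp_inr]
  rw [h₂, h₃]
  exact h₁.trans (charFunDual_isotropicGaussian_residual v w _ _)

lemma add_smul_integral_smul_eq [IsProbabilityMeasure P]
    (hX : HasLaw X (isotropicGaussian ι v) P) (hY : HasLaw Y (isotropicGaussian ι w) P)
    (hXY : IndepFun X Y P) {g : (ι → ℝ) → ℝ} (hg : Measurable g) {C : ℝ} (hC : ∀ z, |g z| ≤ C) :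
    (v + w : ℝ) • ∫ ω, g (X ω + Y ω) • X ω ∂P =
      (v : ℝ) • ∫ ω, g (X ω + Y ω) • (X ω + Y ω) ∂P := by
  have hXm := hX.aemeasurable
  have hYm := hY.aemeasurable
  have hXi := integrable_of_hasLaw_isotropicGaussian hX
  have hYi := integrable_of_hasLaw_isotropicGaussian hY
  have hgi {Z : Ω → ι → ℝ} (hZ : Integrable Z P) :
      Integrable (fun ω ↦ g (X ω + Y ω) • Z ω) P :=
    hZ.bdd_smul C (hg.comp_aemeasurable (hXm.add hYm)).aestronglyMeasurable
      (.of_forall fun ω ↦ hC _)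
  have hresidual : ∫ ω, g (X ω + Y ω) • ((w : ℝ) • X ω - (v : ℝ) • Y ω) ∂P = 0 := by
    have hmean : ∫ ω, ((w : ℝ) • X ω - (v : ℝ) • Y ω) ∂P = 0 := by
      rw [integral_sub (hXi.fun_smul _) (hYi.fun_smul _), integral_smul, integral_smul,
        integral_eq_zero_of_hasLaw_isotropicGaussian hX,
        integral_eq_zero_of_hasLaw_isotropicGaussian hY, smul_zero, smul_zero, sub_zero]
    have h := (indepFun_smul_sub_smul_add hX hY hXY).symm.integral_fun_comp_smul_comp
      (by fun_prop) (by fun_prop) hg.aestronglyMeasurable aestronglyMeasurable_id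
    exact h.trans (by simp only [id, hmean, smul_zero])
  rw [← sub_eq_zero, ← integral_smul, ← integral_smul, ← integral_sub ((hgi hXi).fun_smul _)
    ((hgi (hXi.fun_add hYi)).fun_smul _), ← hresidual]
  refine integral_congr_ae (.of_forall fun ω ↦ ?_)
  module

end IsotropicGaussian

/-- The random vector `Y` is centred Gaussian with covariance matrix `v • 1` and independent of the
`σ`-algebra `m`. This is encoded by the characteristic function of `Y` against `m`-measurable
weights, a form that is stable under pointwise limits. -/
structure IsIndepGaussian {Ω ι : Type*} [Fintype ι] (m : MeasurableSpace Ω)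
    {mΩ : MeasurableSpace Ω} (Y : Ω → ι → ℝ) (v : ℝ≥0) (P : Measure Ω) : Prop where
  measurable : Measurable Y
  integral_mul_cexp : ∀ G : Ω → ℂ, Measurable[m] G → Integrable G P → ∀ L : StrongDual ℝ (ι → ℝ),
    ∫ ω, G ω * Complex.exp (L (Y ω) * Complex.I) ∂P =
      (∫ ω, G ω ∂P) * charFunDual (isotropicGaussian ι v) L

namespace IsIndepGaussian

variable {Ω ι : Type*} {m m' mΩ : MeasurableSpace Ω} [Fintype ι]
  {P : Measure Ω} {X Y : Ω → ι → ℝ} {v w : ℝ≥0}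

lemma of_indep (hm : m ≤ mΩ) (hY : Measurable Y)
    (hlaw : P.map Y = isotropicGaussian ι v)
    (hindep : Indep (MeasurableSpace.comap Y inferInstance) m P) : IsIndepGaussian m Y v P where
  measurable := hY
  integral_mul_cexp G hG _ L := by
    have hGY : IndepFun G Y P := by
      rw [IndepFun_iff_Indep]
      exact indep_of_indep_of_le_left hindep.symm hG.comap_le
    rw [← hlaw, charFunDual_apply, integral_map hY.aemeasurable (by fun_prop)]
    exact hGY.integral_fun_comp_mul_comp (f := id)
      (g := fun z ↦ Complex.exp (L z * Complex.I)) (hG.mono hm le_rfl).aemeasurable hY.aemeasurable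
      aestronglyMeasurable_id (by fun_prop)

lemma zero : IsIndepGaussian m (0 : Ω → ι → ℝ) 0 P where
  measurable := measurable_zero
  integral_mul_cexp G _ _ L := by simp [charFunDual_isotropicGaussian_zero]

lemma const_smul (hY : IsIndepGaussian m Y v P) (c : ℝ) :
    IsIndepGaussian m (c • Y) (‖c‖₊ ^ 2 * v) P where
  measurable := hY.measurable.const_smul c
  integral_mul_cexp G hG hGi L := by
    simpa [charFunDual_isotropicGaussian_smul] using hY.integral_mul_cexp G hG hGi (c • L)

lemma add (hX : IsIndepGaussian m X v P) (hXm : Measurable[m'] X) (hY : IsIndepGaussian m' Y w P)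
    (hmm' : m ≤ m') : IsIndepGaussian m (X + Y) (v + w) P where
  measurable := hX.measurable.add hY.measurable
  integral_mul_cexp G hG hGi L := by
    have hGX : Integrable (fun ω ↦ G ω * Complex.exp (L (X ω) * Complex.I)) P :=
      hGi.mul_bdd (c := 1) (by have := hX.measurable; fun_prop)
        (.of_forall fun ω ↦ (Complex.norm_exp_ofReal_mul_I _).le)
    have hGXm : Measurable[m'] fun ω ↦ G ω * Complex.exp (L (X ω) * Complex.I) :=
      (hG.mono hmm' le_rfl).mul <|
        (show Measurable fun z ↦ Complex.exp (L z * Complex.I) by fun_prop).comp hXm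
    rw [charFunDual_isotropicGaussian_add, ← mul_assoc, ← hX.integral_mul_cexp G hG hGi L,
      ← hY.integral_mul_cexp _ hGXm hGX L]
    refine integral_congr_ae (.of_forall fun ω ↦ ?_)
    simp only [Pi.add_apply, map_add, Complex.ofReal_add, add_mul, Complex.exp_add, mul_assoc]

lemma of_tendsto {Z : ℕ → Ω → ι → ℝ} {q : ℕ → ℝ≥0} (hZ : ∀ n, IsIndepGaussian m (Z n) (q n) P)
    (hZY : ∀ ω, Tendsto (fun n ↦ Z n ω) atTop (𝓝 (Y ω))) (hqv : Tendsto q atTop (𝓝 v)) :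
    IsIndepGaussian m Y v P where
  measurable := measurable_of_tendsto_metrizable (fun n ↦ (hZ n).measurable)
    (tendsto_pi_nhds.2 hZY)
  integral_mul_cexp G hG hGi L := by
    have hlim : Tendsto (fun n ↦ ∫ ω, G ω * Complex.exp (L (Z n ω) * Complex.I) ∂P) atTop
        (𝓝 (∫ ω, G ω * Complex.exp (L (Y ω) * Complex.I) ∂P)) := by
      refine tendsto_integral_of_dominated_convergence (fun ω ↦ ‖G ω‖) (fun n ↦ ?_) hGi.norm
        (fun n ↦ .of_forall fun ω ↦ ?_) (.of_forall fun ω ↦ ?_)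
      · have := (hZ n).measurable
        exact hGi.aestronglyMeasurable.mul (by fun_prop)
      · rw [norm_mul, Complex.norm_exp_ofReal_mul_I, mul_one]
      · have hcont : Continuous fun z ↦ Complex.exp (L z * Complex.I) := by fun_prop
        exact ((hcont.tendsto _).comp (hZY ω)).const_mul _
    refine tendsto_nhds_unique hlim ?_
    simp only [(hZ _).integral_mul_cexp G hG hGi L]
    exact (((continuous_charFunDual_isotropicGaussian L).tendsto v).comp hqv).const_mul _

lemma hasLaw [IsProbabilityMeasure P] (hY : IsIndepGaussian m Y v P) :
    HasLaw Y (isotropicGaussian ι v) P where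
  aemeasurable := hY.measurable.aemeasurable
  map_eq := by
    have := Measure.isProbabilityMeasure_map hY.measurable.aemeasurable (μ := P)
    refine Measure.ext_of_charFunDual (funext fun L ↦ ?_)
    rw [charFunDual_apply, integral_map hY.measurable.aemeasurable (by fun_prop)]
    simpa using hY.integral_mul_cexp 1 measurable_const (integrable_const 1) L

lemma indepFun [IsProbabilityMeasure P] (hm : m ≤ mΩ) (hXm : Measurable[m] X)
    (hY : IsIndepGaussian m Y v P) : IndepFun X Y P := by
  have hX : Measurable X := hXm.mono hm le_rfl
  have hYm := hY.measurable
  rw [indepFun_iff_charFunDual_prod hX.aemeasurable hYm.aemeasurable]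
  intro L
  set L₁ := L.comp (.inl ℝ (ι → ℝ) (ι → ℝ))
  have hG : Measurable[m] fun ω ↦ Complex.exp (L₁ (X ω) * Complex.I) :=
    (show Measurable fun z ↦ Complex.exp (L₁ z * Complex.I) by fun_prop).comp hXm
  have hGi : Integrable (fun ω ↦ Complex.exp (L₁ (X ω) * Complex.I)) P :=
    .of_bound (by fun_prop) 1 (.of_forall fun ω ↦ (Complex.norm_exp_ofReal_mul_I _).le)
  rw [hY.hasLaw.map_eq, charFunDual_apply, charFunDual_apply, integral_map (by fun_prop)
    (by fun_prop), integral_map (by fun_prop) (by fun_prop), ← hY.integral_mul_cexp _ hG hGi]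
  simp_rw [← L.comp_inl_add_comp_inr]
  simp only [L₁, Complex.ofReal_add, add_mul, Complex.exp_add]

end IsIndepGaussian

namespace IsBrownianMotion

variable {Ω : Type*} {m : MeasurableSpace Ω} {P : Measure Ω} {ν : ℕ} {F : Filtration ℝ m}
  {B : ℝ → Ω → Fin ν → ℝ} {h : ℝ → ℝ} {a b : ℝ}

lemma continuousOn_Icc (hB : IsBrownianMotion P ν F B) (ha : 0 ≤ a) (ω : Ω) :
    ContinuousOn (fun r ↦ B r ω) (Set.Icc a b) :=
  (hB.contPaths ω).mono fun _ hr ↦ ha.trans hr.1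

lemma isIndepGaussian_sub (hB : IsBrownianMotion P ν F B) (ha : 0 ≤ a) (hab : a ≤ b) :
    IsIndepGaussian (F a) (fun ω ↦ B b ω - B a ω) (b - a).toNNReal P :=
  .of_indep (F.le a)
    (((hB.adapted b).mono (F.le b) le_rfl).sub ((hB.adapted a).mono (F.le a) le_rfl))
    (hB.gaussIncr a b ha hab) (hB.indepIncr a b ha hab)

lemma measurable_wienerSum (hB : IsBrownianMotion P ν F B) (hab : a ≤ b) (n k : ℕ) :
    Measurable[F (uniformPartition a b n k)] fun ω ↦ wienerSum h (fun r ↦ B r ω) a b n k := by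
  have hBi {i : ℕ} (hi : i ≤ k) :
      Measurable[F (uniformPartition a b n k)] (B (uniformPartition a b n i)) :=
    (hB.adapted _).mono (F.mono (uniformPartition.monotone hab n hi)) le_rfl
  refine Finset.measurable_sum _ fun i hi ↦ ?_
  have hik : i < k := Finset.mem_range.1 hi
  exact ((hBi hik).sub (hBi hik.le)).const_smul (h (uniformPartition a b n i))

lemma isIndepGaussian_wienerSum (hB : IsBrownianMotion P ν F B) (ha : 0 ≤ a) (hab : a ≤ b)
    (n k : ℕ) :
    IsIndepGaussian (F a) (fun ω ↦ wienerSum h (fun r ↦ B r ω) a b n k)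
      (∑ i ∈ Finset.range k, ‖h (uniformPartition a b n i)‖₊ ^ 2 *
        (uniformPartition a b n (i + 1) - uniformPartition a b n i).toNNReal) P := by
  induction k with
  | zero =>
    simp only [wienerSum, Finset.range_zero, Finset.sum_empty]
    exact .zero
  | succ k ih =>
    have hak : a ≤ uniformPartition a b n k := by
      simpa only [uniformPartition.zero_right] using uniformPartition.monotone hab n k.zero_le
    have hincr := hB.isIndepGaussian_sub (ha.trans hak)
      (uniformPartition.monotone hab n k.le_succ)
    simp only [wienerSum_succ, Finset.sum_range_succ]
    exact ih.add (hB.measurable_wienerSum hab n k) (hincr.const_smul _) (F.mono hak)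

lemma measurable_wienerIntegral (hB : IsBrownianMotion P ν F B) (ha : 0 ≤ a) (hab : a ≤ b)
    (hd : ∀ r ∈ Set.Icc a b, DifferentiableAt ℝ h r) (hh : ContinuousOn (deriv h) (Set.Icc a b)) :
    Measurable[F b] fun ω ↦ wienerIntegral h (fun r ↦ B r ω) a b :=
  @measurable_of_tendsto_metrizable _ _ (F b) _ _ _ _ _ _
    (fun n ↦ (hB.measurable_wienerSum hab n n).mono
      (F.mono (uniformPartition.mem_Icc hab le_rfl).2) le_rfl)
    (tendsto_pi_nhds.2 fun ω ↦ tendsto_wienerSum hab hd hh (hB.continuousOn_Icc ha ω))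

lemma isIndepGaussian_wienerIntegral (hB : IsBrownianMotion P ν F B) (ha : 0 ≤ a) (hab : a ≤ b)
    (hd : ∀ r ∈ Set.Icc a b, DifferentiableAt ℝ h r) (hh : ContinuousOn (deriv h) (Set.Icc a b)) :
    IsIndepGaussian (F a) (fun ω ↦ wienerIntegral h (fun r ↦ B r ω) a b)
      (∫ r in a..b, h r ^ 2).toNNReal P := by
  refine .of_tendsto (fun n ↦ hB.isIndepGaussian_wienerSum ha hab n n)
    (fun ω ↦ tendsto_wienerSum hab hd hh (hB.continuousOn_Icc ha ω)) ?_
  have hcont : ContinuousOn (fun r ↦ h r ^ 2) (Set.Icc a b) :=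
    fun r hr ↦ ((hd r hr).continuousAt.pow 2).continuousWithinAt
  refine ((continuous_real_toNNReal.tendsto _).comp
    (tendsto_sum_sub_smul_uniformPartition hab hcont)).congr fun n ↦ ?_
  have hstep (k : ℕ) : 0 ≤ uniformPartition a b n (k + 1) - uniformPartition a b n k :=
    sub_nonneg.2 (uniformPartition.monotone hab n k.le_succ)
  refine NNReal.coe_injective ?_
  rw [Function.comp_apply, Real.coe_toNNReal _
    (Finset.sum_nonneg fun k _ ↦ smul_nonneg (hstep k) (sq_nonneg _))]
  simp [Real.coe_toNNReal _ (hstep _), mul_comm]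

end IsBrownianMotion

section ContinuousPaths

variable {Ω E : Type*} [mΩ : MeasurableSpace Ω] {P : Measure Ω} [NormedAddCommGroup E]
  [SecondCountableTopology E] [MeasurableSpace E] [BorelSpace E] {Z : ℝ → Ω → E} {a b C : ℝ}

lemma aestronglyMeasurable_uncurry_of_continuousOn (hab : a ≤ b)
    (hc : ∀ ω, ContinuousOn (fun u ↦ Z u ω) (Set.Icc a b))
    (hm : ∀ u ∈ Set.Icc a b, Measurable (Z u)) :
    AEStronglyMeasurable (Function.uncurry Z) ((volume.restrict (Set.uIoc a b)).prod P) := by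
  rw [Set.uIoc_of_le hab]
  have hclamp : Measurable (Function.uncurry fun u ↦ Z (Set.projIcc a b hab u)) :=
    measurable_uncurry_of_continuous_of_measurable
      (fun ω ↦ (hc ω).comp_continuous (by fun_prop) fun u ↦ (Set.projIcc a b hab u).2)
      fun u ↦ hm _ (Set.projIcc a b hab u).2
  refine hclamp.aestronglyMeasurable.congr ?_
  have hmem : ∀ᵐ u ∂volume.restrict (Set.Ioc a b), u ∈ Set.Icc a b :=
    (ae_restrict_mem measurableSet_Ioc).mono Set.Ioc_subset_Icc_self
  filter_upwards [Measure.quasiMeasurePreserving_fst.ae hmem] with p hp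
  simp only [Function.uncurry, Set.projIcc_of_mem hab hp]

lemma integrable_uncurry_of_continuousOn [SFinite P] (hab : a ≤ b)
    (hc : ∀ ω, ContinuousOn (fun u ↦ Z u ω) (Set.Icc a b))
    (hm : ∀ u ∈ Set.Icc a b, Measurable (Z u)) (hi : ∀ u ∈ Set.Icc a b, Integrable (Z u) P)
    (hC : ∀ u ∈ Set.Icc a b, ∫ ω, ‖Z u ω‖ ∂P ≤ C) :
    Integrable (Function.uncurry Z) ((volume.restrict (Set.uIoc a b)).prod P) := by
  have hmeas := aestronglyMeasurable_uncurry_of_continuousOn (P := P) hab hc hm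
  rw [Set.uIoc_of_le hab] at hmeas ⊢
  have hmem : ∀ᵐ u ∂volume.restrict (Set.Ioc a b), u ∈ Set.Icc a b :=
    (ae_restrict_mem measurableSet_Ioc).mono Set.Ioc_subset_Icc_self
  refine (integrable_prod_iff hmeas).2 ⟨hmem.mono hi,
    Integrable.of_bound hmeas.norm.integral_prod_right' C (hmem.mono fun u hu ↦ ?_)⟩
  rw [Real.norm_of_nonneg (integral_nonneg fun _ ↦ norm_nonneg _)]
  exact hC u hu

end ContinuousPaths

section InvConstSub

variable {T a b r : ℝ}

lemma hasDerivAt_inv_const_sub (hr : r < T) :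
    HasDerivAt (fun r ↦ (T - r)⁻¹) ((T - r) ^ 2)⁻¹ r := by
  simpa using ((hasDerivAt_id r).const_sub T).fun_inv (sub_pos.2 hr).ne'

lemma continuousOn_inv_sq_const_sub (hb : b < T) :
    ContinuousOn (fun r ↦ ((T - r) ^ 2)⁻¹) (Set.Icc a b) :=
  ContinuousOn.inv₀ (by fun_prop) fun _ hr ↦ pow_ne_zero 2 (sub_pos.2 (hr.2.trans_lt hb)).ne'

lemma continuousOn_deriv_inv_const_sub (hb : b < T) :
    ContinuousOn (deriv fun r ↦ (T - r)⁻¹) (Set.Icc a b) :=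
  (continuousOn_inv_sq_const_sub hb).congr fun _ hr ↦
    (hasDerivAt_inv_const_sub (hr.2.trans_lt hb)).deriv

lemma integral_sq_inv_const_sub (hab : a ≤ b) (hb : b < T) :
    ∫ r in a..b, (T - r)⁻¹ ^ 2 = (T - b)⁻¹ - (T - a)⁻¹ := by
  simp only [inv_pow]
  have hcont := continuousOn_inv_sq_const_sub (a := a) hb
  rw [← Set.uIcc_of_le hab] at hcont
  refine intervalIntegral.integral_eq_sub_of_hasDerivAt (f := fun r ↦ (T - r)⁻¹) (fun r hr ↦ ?_)
    hcont.intervalIntegrable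
  exact hasDerivAt_inv_const_sub ((Set.uIcc_of_le hab ▸ hr : r ∈ Set.Icc a b).2.trans_lt hb)

end InvConstSub

namespace bridgeBB

variable {ν : ℕ} {T s t u : ℝ} {x y : Fin ν → ℝ} {w : ℝ → Fin ν → ℝ}

lemma eq_smul_wienerIntegral (hw₀ : w 0 = 0) (hu : 0 ≤ u) (huT : u < T) :
    bridgeBB ν T x y w u = (u / T) • y + ((T - u) / T) • x +
      (T - u) • wienerIntegral (fun r ↦ (T - r)⁻¹) w 0 u := by
  have hderiv : ∫ r in (0 : ℝ)..u, deriv (fun r ↦ (T - r)⁻¹) r • w r =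
      ∫ r in (0 : ℝ)..u, ((T - r) ^ 2)⁻¹ • w r :=
    intervalIntegral.integral_congr fun r hr ↦ by
      simp only [(hasDerivAt_inv_const_sub
        ((Set.uIcc_of_le hu ▸ hr : r ∈ Set.Icc 0 u).2.trans_lt huT)).deriv]
  rw [bridgeBB, if_pos huT, wienerIntegral, hderiv, hw₀, smul_zero, sub_zero, smul_sub,
    smul_inv_smul₀ (sub_pos.2 huT).ne', add_sub_assoc]

lemma hasDerivAt_sub (hw : ContinuousOn w (Set.Ici 0)) (hu : 0 < u) (huT : u < T) :
    HasDerivAt (fun r ↦ bridgeBB ν T x y w r - w r)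
      ((T - u)⁻¹ • (y - bridgeBB ν T x y w u)) u := by
  have hcont : ∀ r ∈ Set.Ioo 0 T, ContinuousAt (fun r ↦ ((T - r) ^ 2)⁻¹ • w r) r := fun r hr ↦
    ContinuousAt.fun_smul
      (ContinuousAt.inv₀ (by fun_prop) (pow_ne_zero 2 (sub_pos.2 hr.2).ne'))
      (hw.continuousAt (Ici_mem_nhds hr.1))
  have hprimitive : HasDerivAt (fun r ↦ ∫ q in (0 : ℝ)..r, ((T - q) ^ 2)⁻¹ • w q)
      (((T - u) ^ 2)⁻¹ • w u) u :=
    intervalIntegral.integral_hasDerivAt_right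
      (((continuousOn_inv_sq_const_sub huT).smul
        (hw.mono Set.Icc_subset_Ici_self)).intervalIntegrable_of_Icc hu.le)
      (ContinuousAt.stronglyMeasurableAtFilter isOpen_Ioo hcont u ⟨hu, huT⟩) (hcont u ⟨hu, huT⟩)
  have hT : T ≠ 0 := (hu.trans huT).ne'
  have hTu : T - u ≠ 0 := (sub_pos.2 huT).ne'
  have hsub := (hasDerivAt_id u).const_sub T
  refine ((((hasDerivAt_id u).div_const T).smul_const y).add ((hsub.div_const T).smul_const x)
    |>.sub (hsub.smul hprimitive)).congr_deriv ?_ |>.congr_of_eventuallyEq ?_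
  · rw [bridgeBB, if_pos huT]
    ext i
    simp only [id, Pi.add_apply, Pi.sub_apply, Pi.smul_apply, smul_eq_mul]
    field_simp
    ring
  · filter_upwards [Iio_mem_nhds huT] with r hr
    rw [bridgeBB, if_pos (Set.mem_Iio.1 hr)]
    simp only [id, Pi.add_apply, Pi.sub_apply, Pi.smul_apply']
    abel

lemma continuousAt (hw : ContinuousOn w (Set.Ici 0)) (hu : 0 < u) (huT : u < T) :
    ContinuousAt (bridgeBB ν T x y w) u := by
  simpa only [sub_add_cancel] using
    (hasDerivAt_sub (x := x) (y := y) hw hu huT).continuousAt.fun_add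
      (hw.continuousAt (Ici_mem_nhds hu))

lemma continuousOn_Icc (hw : ContinuousOn w (Set.Ici 0)) (hs : 0 < s) (htT : t < T) :
    ContinuousOn (bridgeBB ν T x y w) (Set.Icc s t) := fun _ hr ↦
  (continuousAt hw (hs.trans_le hr.1) (hr.2.trans_lt htT)).continuousWithinAt

lemma continuousOn_inv_smul_sub (hw : ContinuousOn w (Set.Ici 0)) (hs : 0 < s) (htT : t < T) :
    ContinuousOn (fun u ↦ u⁻¹ • (x - bridgeBB ν T x y w u)) (Set.Icc s t) :=
  (ContinuousOn.inv₀ continuousOn_id fun _ hr ↦ (hs.trans_le hr.1).ne').smul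
    (continuousOn_const.sub (continuousOn_Icc hw hs htT))

lemma continuousOn_inv_const_sub_smul_sub (hw : ContinuousOn w (Set.Ici 0)) (hs : 0 < s)
    (htT : t < T) :
    ContinuousOn (fun u ↦ (T - u)⁻¹ • (y - bridgeBB ν T x y w u)) (Set.Icc s t) :=
  (ContinuousOn.inv₀ (by fun_prop) fun _ hr ↦ (sub_pos.2 (hr.2.trans_lt htT)).ne').smul
    (continuousOn_const.sub (continuousOn_Icc hw hs htT))

lemma integral_inv_const_sub_smul_sub (hw : ContinuousOn w (Set.Ici 0)) (hs : 0 < s)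
    (hst : s ≤ t) (htT : t < T) :
    ∫ u in s..t, (T - u)⁻¹ • (y - bridgeBB ν T x y w u) =
      bridgeBB ν T x y w t - bridgeBB ν T x y w s - (w t - w s) := by
  rw [intervalIntegral.integral_eq_sub_of_hasDerivAt
    (f := fun r ↦ bridgeBB ν T x y w r - w r) (fun u hu ↦ ?_)
    ((continuousOn_inv_const_sub_smul_sub hw hs htT).intervalIntegrable_of_Icc hst)]
  · abel
  · rw [Set.uIcc_of_le hst] at hu
    exact hasDerivAt_sub hw (hs.trans_le hu.1) (hu.2.trans_lt htT)

lemma integral_inv_smul_sub_add_inv_const_sub_smul_sub (hw : ContinuousOn w (Set.Ici 0))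
    (hs : 0 < s) (hst : s ≤ t) (htT : t < T) :
    ∫ u in s..t, (u⁻¹ • (x - bridgeBB ν T x y w u) + (T - u)⁻¹ • (y - bridgeBB ν T x y w u)) =
      bridgeBB ν T x y w t - bridgeBB ν T x y w s +
        (∫ u in s..t, u⁻¹ • (x - bridgeBB ν T x y w u)) - (w t - w s) := by
  rw [intervalIntegral.integral_add
    ((continuousOn_inv_smul_sub hw hs htT).intervalIntegrable_of_Icc hst)
    ((continuousOn_inv_const_sub_smul_sub hw hs htT).intervalIntegrable_of_Icc hst),
    integral_inv_const_sub_smul_sub hw hs hst htT]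
  abel

end bridgeBB

namespace IsBrownianMotion

variable {Ω : Type*} {m : MeasurableSpace Ω} {P : Measure Ω} {ν : ℕ} {F : Filtration ℝ m}
  {B : ℝ → Ω → Fin ν → ℝ} {T a b s t u C : ℝ} {x y : Fin ν → ℝ} {f : (Fin ν → ℝ) → ℝ}

lemma measurable_wienerIntegral_inv_const_sub (hB : IsBrownianMotion P ν F B) (ha : 0 ≤ a)
    (hab : a ≤ b) (hb : b < T) :
    Measurable[F b] fun ω ↦ wienerIntegral (fun r ↦ (T - r)⁻¹) (fun r ↦ B r ω) a b :=
  hB.measurable_wienerIntegral ha hab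
    (fun _ hr ↦ (hasDerivAt_inv_const_sub (hr.2.trans_lt hb)).differentiableAt)
    (continuousOn_deriv_inv_const_sub hb)

lemma isIndepGaussian_wienerIntegral_inv_const_sub (hB : IsBrownianMotion P ν F B) (ha : 0 ≤ a)
    (hab : a ≤ b) (hb : b < T) :
    IsIndepGaussian (F a)
      (fun ω ↦ wienerIntegral (fun r ↦ (T - r)⁻¹) (fun r ↦ B r ω) a b)
      ((T - b)⁻¹ - (T - a)⁻¹).toNNReal P := by
  rw [← integral_sq_inv_const_sub hab hb]
  exact hB.isIndepGaussian_wienerIntegral ha hab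
    (fun _ hr ↦ (hasDerivAt_inv_const_sub (hr.2.trans_lt hb)).differentiableAt)
    (continuousOn_deriv_inv_const_sub hb)

lemma bridgeBB_eq (hB : IsBrownianMotion P ν F B) (hu : 0 ≤ u) (huT : u < T) (ω : Ω) :
    bridgeBB ν T x y (B · ω) u = (u / T) • y + ((T - u) / T) • x +
      (T - u) • wienerIntegral (fun r ↦ (T - r)⁻¹) (B · ω) 0 u :=
  bridgeBB.eq_smul_wienerIntegral (hB.start ω) hu huT

lemma measurable_bridgeBB (hB : IsBrownianMotion P ν F B) (hu : 0 ≤ u) (huT : u < T) :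
    Measurable fun ω ↦ bridgeBB ν T x y (B · ω) u := by
  simp only [hB.bridgeBB_eq hu huT]
  have hW := (hB.measurable_wienerIntegral_inv_const_sub le_rfl hu huT).mono (F.le u) le_rfl
  fun_prop

lemma hasLaw_bridgeBB_sub [IsProbabilityMeasure P] (hB : IsBrownianMotion P ν F B) (hu : 0 ≤ u)
    (huT : u < T) :
    HasLaw (fun ω ↦ bridgeBB ν T x y (B · ω) u - ((u / T) • y + ((T - u) / T) • x))
      (isotropicGaussian (Fin ν) (u * (T - u) / T).toNNReal) P := by
  simp only [hB.bridgeBB_eq hu huT, add_sub_cancel_left]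
  have hT : 0 < T := hu.trans_lt huT
  have hTu : 0 < T - u := sub_pos.2 huT
  have hvar : (u * (T - u) / T).toNNReal =
      ‖T - u‖₊ ^ 2 * ((T - u)⁻¹ - (T - 0)⁻¹).toNNReal := by
    rw [sub_zero, Real.nnnorm_of_nonneg hTu.le, ← Real.toNNReal_of_nonneg hTu.le,
      ← Real.toNNReal_pow hTu.le, ← Real.toNNReal_mul (by positivity)]
    congr 1
    field_simp
    ring
  rw [hvar]
  exact ((hB.isIndepGaussian_wienerIntegral_inv_const_sub le_rfl hu huT).const_smul (T - u)).hasLaw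

lemma integrable_bridgeBB [IsProbabilityMeasure P] (hB : IsBrownianMotion P ν F B) (hu : 0 ≤ u)
    (huT : u < T) : Integrable (fun ω ↦ bridgeBB ν T x y (B · ω) u) P := by
  simpa only [sub_add_cancel] using
    (integrable_of_hasLaw_isotropicGaussian (hB.hasLaw_bridgeBB_sub (x := x) (y := y) hu huT)
      ).fun_add (integrable_const ((u / T) • y + ((T - u) / T) • x))

lemma integral_norm_sub_bridgeBB_le [IsProbabilityMeasure P] (hB : IsBrownianMotion P ν F B)
    (hu : 0 ≤ u) (huT : u < T) :
    ∫ ω, ‖x - bridgeBB ν T x y (B · ω) u‖ ∂P ≤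
      √T * ∫ z, ‖z‖ ∂isotropicGaussian (Fin ν) 1 + ‖x - y‖ := by
  have hT : 0 < T := hu.trans_lt huT
  have : 0 < T - u := sub_pos.2 huT
  have hlaw := hB.hasLaw_bridgeBB_sub (x := x) (y := y) hu huT
  set Y := fun ω ↦ bridgeBB ν T x y (B · ω) u - ((u / T) • y + ((T - u) / T) • x)
  have hbound (ω : Ω) : ‖x - bridgeBB ν T x y (B · ω) u‖ ≤ ‖Y ω‖ + ‖x - y‖ := by
    have hsplit : x - bridgeBB ν T x y (B · ω) u = (u / T) • (x - y) - Y ω := by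
      simp only [Y]
      rw [sub_div, div_self hT.ne']
      module
    have hle : u / T ≤ 1 := (div_le_one hT).2 huT.le
    rw [hsplit, add_comm]
    refine (norm_sub_le _ _).trans (add_le_add_left ?_ _)
    rw [norm_smul, Real.norm_of_nonneg (by positivity)]
    exact mul_le_of_le_one_left (norm_nonneg _) hle
  have hYnorm : ∫ ω, ‖Y ω‖ ∂P ≤ √T * ∫ z, ‖z‖ ∂isotropicGaussian (Fin ν) 1 := by
    have hvar : u * (T - u) / T ≤ T := by
      rw [div_le_iff₀ hT]
      gcongr
      linarith
    have hnorm := hlaw.integral_comp (f := fun z ↦ ‖z‖) (by fun_prop)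
    rw [Function.comp_def] at hnorm
    rw [hnorm, integral_norm_isotropicGaussian]
    gcongr
    rwa [Real.coe_toNNReal _ (by positivity)]
  have hYi := (integrable_of_hasLaw_isotropicGaussian hlaw).norm
  calc ∫ ω, ‖x - bridgeBB ν T x y (B · ω) u‖ ∂P
      ≤ ∫ ω, (‖Y ω‖ + ‖x - y‖) ∂P := integral_mono
        ((integrable_const x).sub (hB.integrable_bridgeBB hu huT)).norm
        (hYi.add (integrable_const _)) hbound
    _ = ∫ ω, ‖Y ω‖ ∂P + ‖x - y‖ := by
      rw [integral_add hYi (integrable_const _), integral_const, probReal_univ, one_smul]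
    _ ≤ √T * ∫ z, ‖z‖ ∂isotropicGaussian (Fin ν) 1 + ‖x - y‖ := by gcongr

lemma integrable_smul_of_bridgeBB (hB : IsBrownianMotion P ν F B)
    (ht : 0 ≤ t) (htT : t < T) (hf : Measurable f) (hC : ∀ z, |f z| ≤ C) {Y : Ω → Fin ν → ℝ}
    (hY : Integrable Y P) :
    Integrable (fun ω ↦ f (bridgeBB ν T x y (B · ω) t) • Y ω) P :=
  hY.bdd_smul C (hf.comp (hB.measurable_bridgeBB ht htT)).aestronglyMeasurable
    (.of_forall fun _ ↦ hC _)

lemma integral_smul_wienerIntegral_eq [IsProbabilityMeasure P] (hB : IsBrownianMotion P ν F B)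
    (hu : 0 ≤ u) (hut : u ≤ t) (htT : t < T) (hf : Measurable f) (hC : ∀ z, |f z| ≤ C) :
    (t * (T - u)) • ∫ ω, f (bridgeBB ν T x y (B · ω) t) •
        wienerIntegral (fun r ↦ (T - r)⁻¹) (B · ω) 0 u ∂P =
      (u * (T - t)) • ∫ ω, f (bridgeBB ν T x y (B · ω) t) •
        wienerIntegral (fun r ↦ (T - r)⁻¹) (B · ω) 0 t ∂P := by
  have huT := hut.trans_lt htT
  have hT : 0 < T := hu.trans_lt huT
  have : 0 < T - u := sub_pos.2 huT
  have hTt : 0 < T - t := sub_pos.2 htT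
  have hpast := hB.isIndepGaussian_wienerIntegral_inv_const_sub le_rfl hu huT
  have hincr := hB.isIndepGaussian_wienerIntegral_inv_const_sub hu hut htT
  have hadd (ω : Ω) := wienerIntegral_add_adjacent (w := (B · ω)) hu hut
    (continuousOn_deriv_inv_const_sub htT) (hB.continuousOn_Icc le_rfl ω)
  have hregression := add_smul_integral_smul_eq hpast.hasLaw hincr.hasLaw
    (hincr.indepFun (F.le u) (hB.measurable_wienerIntegral_inv_const_sub le_rfl hu huT))
    (g := fun z ↦ f ((t / T) • y + ((T - t) / T) • x + (T - t) • z))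
    (hf.comp (by fun_prop)) fun _ ↦ hC _
  have hpastvar : 0 ≤ (T - u)⁻¹ - T⁻¹ := sub_nonneg.2 (by gcongr; linarith)
  have hincrvar : 0 ≤ (T - t)⁻¹ - (T - u)⁻¹ := sub_nonneg.2 (by gcongr)
  rw [sub_zero, Real.coe_toNNReal _ hpastvar, Real.coe_toNNReal _ hincrvar] at hregression
  simp only [hadd, ← hB.bridgeBB_eq (hu.trans hut) htT] at hregression
  have hscaled := congrArg ((T * (T - u) * (T - t)) • ·) hregression
  simp only [smul_smul] at hscaled
  convert hscaled using 2
  · field_simp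
    ring
  · field_simp
    ring

lemma integral_smul_bridgeBB_sub_eq [IsProbabilityMeasure P] (hB : IsBrownianMotion P ν F B)
    (hu : 0 < u) (hut : u ≤ t) (htT : t < T) (hf : Measurable f) (hC : ∀ z, |f z| ≤ C) :
    ∫ ω, f (bridgeBB ν T x y (B · ω) t) • (bridgeBB ν T x y (B · ω) u - x) ∂P =
      (u / t) • ∫ ω, f (bridgeBB ν T x y (B · ω) t) • (bridgeBB ν T x y (B · ω) t - x) ∂P := by
  have ht : 0 < t := hu.trans_le hut
  have hT : 0 < T := ht.trans htT
  set W := fun r ω ↦ wienerIntegral (fun r ↦ (T - r)⁻¹) (B · ω) 0 r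
  have hexpand {r : ℝ} (hr : 0 ≤ r) (hrT : r < T) :
      ∫ ω, f (bridgeBB ν T x y (B · ω) t) • (bridgeBB ν T x y (B · ω) r - x) ∂P =
        (r / T) • ∫ ω, f (bridgeBB ν T x y (B · ω) t) • (y - x) ∂P +
          (T - r) • ∫ ω, f (bridgeBB ν T x y (B · ω) t) • W r ω ∂P := by
    have hWi : Integrable (W r) P := integrable_of_hasLaw_isotropicGaussian
      (hB.isIndepGaussian_wienerIntegral_inv_const_sub le_rfl hr hrT).hasLaw
    rw [← integral_smul, ← integral_smul, ← integral_add
      ((hB.integrable_smul_of_bridgeBB ht.le htT hf hC (integrable_const _)).fun_smul _)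
      ((hB.integrable_smul_of_bridgeBB ht.le htT hf hC hWi).fun_smul _)]
    refine integral_congr_ae (.of_forall fun ω ↦ ?_)
    simp only [hB.bridgeBB_eq hr hrT ω, W, sub_div, div_self hT.ne']
    module
  have hregression := congrArg (t⁻¹ • ·)
    (hB.integral_smul_wienerIntegral_eq (x := x) (y := y) hu.le hut htT hf hC)
  simp only [smul_smul, inv_mul_cancel_left₀ ht.ne'] at hregression
  rw [hexpand hu.le (hut.trans_lt htT), hexpand ht.le htT, hregression, smul_add, smul_smul,
    smul_smul, div_mul_div_cancel₀ ht.ne', div_eq_inv_mul u t, mul_assoc]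

lemma integral_smul_bridgeBB_sub_bridgeBB [IsProbabilityMeasure P]
    (hB : IsBrownianMotion P ν F B) (hs : 0 < s) (hst : s ≤ t) (htT : t < T) (hf : Measurable f)
    (hC : ∀ z, |f z| ≤ C) :
    ∫ ω, f (bridgeBB ν T x y (B · ω) t) •
        (bridgeBB ν T x y (B · ω) t - bridgeBB ν T x y (B · ω) s) ∂P =
      ((t - s) / t) • ∫ ω, f (bridgeBB ν T x y (B · ω) t) •
        (bridgeBB ν T x y (B · ω) t - x) ∂P := by
  have ht : 0 < t := hs.trans_le hst
  have hi {r : ℝ} (hr : 0 ≤ r) (hrT : r < T) :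
      Integrable (fun ω ↦ f (bridgeBB ν T x y (B · ω) t) • (bridgeBB ν T x y (B · ω) r - x)) P :=
    hB.integrable_smul_of_bridgeBB ht.le htT hf hC
      ((hB.integrable_bridgeBB hr hrT).sub (integrable_const x))
  rw [sub_div, div_self ht.ne', sub_smul, one_smul,
    ← hB.integral_smul_bridgeBB_sub_eq hs hst htT hf hC,
    ← integral_sub (hi ht.le htT) (hi hs.le (hst.trans_lt htT))]
  simp only [← smul_sub, sub_sub_sub_cancel_right]

lemma integrable_uncurry_smul_bridgeBB [IsProbabilityMeasure P]
    (hB : IsBrownianMotion P ν F B) (hs : 0 < s) (hst : s ≤ t) (htT : t < T) (hf : Measurable f)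
    (hC : ∀ z, |f z| ≤ C) :
    Integrable (Function.uncurry fun u ω ↦ f (bridgeBB ν T x y (B · ω) t) •
      u⁻¹ • (x - bridgeBB ν T x y (B · ω) u)) ((volume.restrict (Set.uIoc s t)).prod P) := by
  have ht : 0 ≤ t := hs.le.trans hst
  have hC₀ : 0 ≤ C := (abs_nonneg _).trans (hC 0)
  set M := √T * ∫ z, ‖z‖ ∂isotropicGaussian (Fin ν) 1 + ‖x - y‖
  have hdrift {u : ℝ} (hu : u ∈ Set.Icc s t) :
      Integrable (fun ω ↦ x - bridgeBB ν T x y (B · ω) u) P :=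
    (integrable_const x).sub (hB.integrable_bridgeBB (hs.le.trans hu.1) (hu.2.trans_lt htT))
  have hmeas {u : ℝ} (hu : u ∈ Set.Icc s t) :=
    hB.measurable_bridgeBB (x := x) (y := y) (hs.le.trans hu.1) (hu.2.trans_lt htT)
  refine integrable_uncurry_of_continuousOn (C := C * (s⁻¹ * M)) hst
    (fun ω ↦ (bridgeBB.continuousOn_inv_smul_sub (hB.contPaths ω) hs htT).fun_const_smul _)
    (fun u hu ↦ (hf.comp (hmeas (Set.right_mem_Icc.2 hst))).smul
      (((hmeas hu).const_sub x).fun_const_smul u⁻¹))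
    (fun u hu ↦ hB.integrable_smul_of_bridgeBB ht htT hf hC ((hdrift hu).fun_smul _))
    fun u hu ↦ ?_
  have hu₀ : 0 < u := hs.trans_le hu.1
  have hbound (ω : Ω) : ‖f (bridgeBB ν T x y (B · ω) t) •
      u⁻¹ • (x - bridgeBB ν T x y (B · ω) u)‖ ≤
        C * (s⁻¹ * ‖x - bridgeBB ν T x y (B · ω) u‖) := by
    rw [norm_smul, norm_smul, norm_inv, Real.norm_of_nonneg hu₀.le]
    gcongr
    exacts [hC _, hu.1]
  calc _ ≤ ∫ ω, C * (s⁻¹ * ‖x - bridgeBB ν T x y (B · ω) u‖) ∂P :=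
        integral_mono_of_nonneg (.of_forall fun _ ↦ norm_nonneg _)
          (((hdrift hu).norm.const_mul _).const_mul _) (.of_forall hbound)
    _ = C * (s⁻¹ * ∫ ω, ‖x - bridgeBB ν T x y (B · ω) u‖ ∂P) := by
      rw [integral_const_mul, integral_const_mul]
    _ ≤ C * (s⁻¹ * M) := by
      gcongr
      exact hB.integral_norm_sub_bridgeBB_le hu₀.le (hu.2.trans_lt htT)

lemma integral_smul_integral_bridgeBB [IsProbabilityMeasure P]
    (hB : IsBrownianMotion P ν F B) (hs : 0 < s) (hst : s ≤ t) (htT : t < T) (hf : Measurable f)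
    (hC : ∀ z, |f z| ≤ C) :
    ∫ ω, f (bridgeBB ν T x y (B · ω) t) •
        (∫ u in s..t, u⁻¹ • (x - bridgeBB ν T x y (B · ω) u)) ∂P =
      ((s - t) / t) • ∫ ω, f (bridgeBB ν T x y (B · ω) t) •
        (bridgeBB ν T x y (B · ω) t - x) ∂P := by
  simp only [← intervalIntegral.integral_smul]
  rw [← intervalIntegral_integral_swap (hB.integrable_uncurry_smul_bridgeBB hs hst htT hf hC)]
  set A := ∫ ω, f (bridgeBB ν T x y (B · ω) t) • (bridgeBB ν T x y (B · ω) t - x) ∂P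
  have hinner : ∀ u ∈ Set.uIcc s t, ∫ ω, f (bridgeBB ν T x y (B · ω) t) •
      u⁻¹ • (x - bridgeBB ν T x y (B · ω) u) ∂P = -t⁻¹ • A := fun u hu ↦ by
    rw [Set.uIcc_of_le hst] at hu
    have hu₀ : 0 < u := hs.trans_le hu.1
    have hcoeff : -t⁻¹ = -u⁻¹ * (u / t) := by field_simp
    rw [hcoeff, mul_smul, ← hB.integral_smul_bridgeBB_sub_eq hu₀ hu.2 htT hf hC, ← integral_smul]
    refine integral_congr_ae (.of_forall fun ω ↦ ?_)
    module
  rw [intervalIntegral.integral_congr hinner, intervalIntegral.integral_const, smul_smul]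
  congr 1
  ring

lemma integrable_smul_integral_bridgeBB [IsProbabilityMeasure P]
    (hB : IsBrownianMotion P ν F B) (hs : 0 < s) (hst : s ≤ t) (htT : t < T) (hf : Measurable f)
    (hC : ∀ z, |f z| ≤ C) :
    Integrable (fun ω ↦ f (bridgeBB ν T x y (B · ω) t) •
      ∫ u in s..t, u⁻¹ • (x - bridgeBB ν T x y (B · ω) u)) P := by
  have hjoint := hB.integrable_uncurry_smul_bridgeBB (x := x) (y := y) hs hst htT hf hC
  rw [Set.uIoc_of_le hst] at hjoint
  simpa only [Function.uncurry, ← intervalIntegral.integral_of_le hst,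
    intervalIntegral.integral_smul] using hjoint.integral_prod_right

lemma integrable_smul_bridgeBB_sub_add_integral [IsProbabilityMeasure P]
    (hB : IsBrownianMotion P ν F B) (hs : 0 < s) (hst : s ≤ t) (htT : t < T) (hf : Measurable f)
    (hC : ∀ z, |f z| ≤ C) :
    Integrable (fun ω ↦ f (bridgeBB ν T x y (B · ω) t) • (bridgeBB ν T x y (B · ω) t -
      bridgeBB ν T x y (B · ω) s + ∫ u in s..t, u⁻¹ • (x - bridgeBB ν T x y (B · ω) u))) P := by
  have ht : 0 < t := hs.trans_le hst
  have hincr : Integrable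
      (fun ω ↦ bridgeBB ν T x y (B · ω) t - bridgeBB ν T x y (B · ω) s) P :=
    (hB.integrable_bridgeBB ht.le htT).sub (hB.integrable_bridgeBB hs.le (hst.trans_lt htT))
  simp only [smul_add]
  exact (hB.integrable_smul_of_bridgeBB ht.le htT hf hC hincr).add
    (hB.integrable_smul_integral_bridgeBB hs hst htT hf hC)

lemma integral_smul_bridgeBB_sub_add_integral_eq_zero [IsProbabilityMeasure P]
    (hB : IsBrownianMotion P ν F B) (hs : 0 < s) (hst : s ≤ t) (htT : t < T) (hf : Measurable f)
    (hC : ∀ z, |f z| ≤ C) :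
    ∫ ω, f (bridgeBB ν T x y (B · ω) t) • (bridgeBB ν T x y (B · ω) t -
      bridgeBB ν T x y (B · ω) s + ∫ u in s..t, u⁻¹ • (x - bridgeBB ν T x y (B · ω) u)) ∂P =
        0 := by
  have ht : 0 < t := hs.trans_le hst
  have hincr : Integrable
      (fun ω ↦ bridgeBB ν T x y (B · ω) t - bridgeBB ν T x y (B · ω) s) P :=
    (hB.integrable_bridgeBB ht.le htT).sub (hB.integrable_bridgeBB hs.le (hst.trans_lt htT))
  simp only [smul_add]
  rw [integral_add (hB.integrable_smul_of_bridgeBB ht.le htT hf hC hincr)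
      (hB.integrable_smul_integral_bridgeBB hs hst htT hf hC),
    hB.integral_smul_bridgeBB_sub_bridgeBB hs hst htT hf hC,
    hB.integral_smul_integral_bridgeBB hs hst htT hf hC]
  module

end IsBrownianMotion

/-- For `0 < s < t < T` and bounded Borel `f : ℝ^ν → ℝ`, the
`ℝ^ν`-valued identity
`E[f(b_t)(B_t − B_s)] = −E[f(b_t) ∫ₛᵗ ((x − b_u)/u + (y − b_u)/(T−u)) du]` holds. -/
theorem statement13 {Ω : Type*} [m : MeasurableSpace Ω] (P : Measure Ω)
    [IsProbabilityMeasure P] (ν : ℕ) (hν : 0 < ν) (F : Filtration ℝ m)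
    (B : ℝ → Ω → Fin ν → ℝ) (hB : IsBrownianMotion P ν F B) (T : ℝ) (hT : 0 < T)
    (x y : Fin ν → ℝ) (s t : ℝ) (hs : 0 < s) (hst : s < t) (htT : t < T)
    (f : (Fin ν → ℝ) → ℝ) (hfm : Measurable f) (hfb : ∃ C, ∀ z, |f z| ≤ C) :
    ∫ ω, f (bridgeBB ν T x y (fun u => B u ω) t) • (B t ω - B s ω) ∂P =
      -∫ ω, f (bridgeBB ν T x y (fun u => B u ω) t) •
          (∫ u in s..t,
            (u⁻¹ • (x - bridgeBB ν T x y (fun r => B r ω) u) +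
              (T - u)⁻¹ • (y - bridgeBB ν T x y (fun r => B r ω) u))) ∂P := by
  obtain ⟨C, hC⟩ := hfb
  have ht : 0 ≤ t := (hs.trans hst).le
  have hincr : Integrable (fun ω ↦ B t ω - B s ω) P :=
    integrable_of_hasLaw_isotropicGaussian (hB.isIndepGaussian_sub hs.le hst.le).hasLaw
  simp only [bridgeBB.integral_inv_smul_sub_add_inv_const_sub_smul_sub (hB.contPaths _) hs hst.le
    htT, smul_sub _ _ (B t _ - B s _)]
  rw [integral_sub (hB.integrable_smul_bridgeBB_sub_add_integral hs hst.le htT hfm hC)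
      (hB.integrable_smul_of_bridgeBB ht htT hfm hC hincr),
    hB.integral_smul_bridgeBB_sub_add_integral_eq_zero hs hst.le htT hfm hC, zero_sub, neg_neg]
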